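/- arXiv:2306.14075 — 2 statements merged into one kernel-verified Lean document; each statement's English description precedes it below -/
import Mathlib

section
/- Let X be an n-element variable set and let Σ = {τ_1, …, τ_s} be a simple set of abstract statistics over X, meaning every τ_i = ((V_i|U_i), p_i) has |U_i| ≤ 1. Then for every b ∈ ℝ^s: Log-U-Bound_{N_n}(Σ, b) = Log-U-Bound_{Γ̄*_n}(Σ, b) = Log-U-Bound_{Γ_n}(Σ, b). -/
open scoped BigOperators ENNReal

namespace JoinBounds

noncomputable section

variable {A α : Type*}

/-- The projection of a tuple `t : A → α` onto the attribute set `U`, represented as a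
partial tuple. -/
def proj [DecidableEq A] (U : Finset A) (t : A → α) : A → Option α :=
  fun x => if x ∈ U then some (t x) else none

/-- The projection of a relation `R` onto the attribute set `U`. -/
def projR [Fintype A] [DecidableEq A] [DecidableEq α] (U : Finset A) (R : Finset (A → α)) :
    Finset (A → Option α) :=
  R.image (proj U)

/-- The degree of a `U`-tuple `u` in `R`: the number of distinct `V`-tuples
appearing in `R` together with `u`. -/
def deg [Fintype A] [DecidableEq A] [DecidableEq α] (U V : Finset A) (R : Finset (A → α))
    (u : A → Option α) : ℕ :=
  (projR V (R.filter fun t => proj U t = u)).card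

/-- The `ℓ_p`-norm of the degree sequence `deg_R(V|U)`, for `p ∈ (0, ∞]`. -/
def lpNorm [Fintype A] [DecidableEq A] [DecidableEq α] (U V : Finset A) (R : Finset (A → α))
    (p : ℝ≥0∞) : ℝ :=
  if p = ⊤ then (((projR U R).sup fun u => deg U V R u : ℕ) : ℝ)
  else (∑ u ∈ projR U R, (deg U V R u : ℝ) ^ p.toReal) ^ (1 / p.toReal)

/-- The marginal probability, on the attribute set `W`, of the partial tuple `w`, under a
probability distribution `P` on the tuples of `R`. -/
def marg [Fintype A] [DecidableEq A] [DecidableEq α] (P : (A → α) → ℝ) (R : Finset (A → α))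
    (W : Finset A) (w : A → Option α) : ℝ :=
  ∑ t ∈ R.filter fun t => proj W t = w, P t

/-- The (base-2 Shannon) entropy of the marginal on the attribute set `W` of the
distribution `P` on the tuples of `R`: this is the entropic vector `h(W)`. -/
def entropy [Fintype A] [DecidableEq A] [DecidableEq α] (P : (A → α) → ℝ) (R : Finset (A → α))
    (W : Finset A) : ℝ :=
  -∑ w ∈ projR W R, marg P R W w * Real.logb 2 (marg P R W w)

noncomputable section

variable {A : Type*}

/-- `h(τ)` for the abstract statistics `τ = ((V|U), p)`:
`(1/p)·h(U) + h(V|U)` where `h(V|U) = h(U ∪ V) - h(U)` and `1/∞ = 0`. -/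
def statVal [DecidableEq A] (h : Finset A → ℝ) (U V : Finset A) (p : ℝ≥0∞) : ℝ :=
  (1 / p).toReal * h U + (h (U ∪ V) - h U)

/-- A polymatroid on the variable set `A`. -/
def IsPolymatroid [DecidableEq A] (h : Finset A → ℝ) : Prop :=
  h ∅ = 0 ∧ (∀ U V : Finset A, U ⊆ V → h U ≤ h V) ∧
    ∀ U V : Finset A, h U + h V ≥ h (U ∪ V) + h (U ∩ V)

/-- The set `Γ_n` of polymatroids. -/
def Gamma (A : Type*) [DecidableEq A] : Set (Finset A → ℝ) := {h | IsPolymatroid h}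

/-- The step function `h^W`. -/
def stepFn [DecidableEq A] (W : Finset A) : Finset A → ℝ :=
  fun U => if (U ∩ W).Nonempty then 1 else 0

/-- The set `N_n` of normal polymatroids: nonnegative linear combinations of step functions. -/
def Normal (A : Type*) [Fintype A] [DecidableEq A] : Set (Finset A → ℝ) :=
  {h | ∃ α : Finset A → ℝ, (∀ W, 0 ≤ α W) ∧ h = ∑ W : Finset A, α W • stepFn W}

/-- `Log-U-Bound_K(Σ, b)`: the infimum of `∑ i, w i * b i` over all nonnegative `w` such that the
`Σ`-inequality `∑ i, w i * h(τ i) ≥ h(X)` is valid for all `h ∈ K` (an `EReal`; `⊤` if no valid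
inequality exists). -/
def LogUBound [Fintype A] [DecidableEq A] (K : Set (Finset A → ℝ)) (s : ℕ)
    (U V : Fin s → Finset A) (p : Fin s → ℝ≥0∞) (b : Fin s → ℝ) : EReal :=
  sInf {r : EReal | ∃ w : Fin s → ℝ, (∀ i, 0 ≤ w i) ∧
    (∀ h ∈ K, ∑ i, w i * statVal h (U i) (V i) (p i) ≥ h Finset.univ) ∧
    r = ((∑ i, w i * b i : ℝ) : EReal)}

/-- `Log-L-Bound_K(Σ, b)`: the supremum of `h(X)` over all `h ∈ K` satisfying the
log-statistics `h(τ i) ≤ b i` (an `EReal`). -/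
def LogLBound [Fintype A] [DecidableEq A] (K : Set (Finset A → ℝ)) (s : ℕ)
    (U V : Fin s → Finset A) (p : Fin s → ℝ≥0∞) (b : Fin s → ℝ) : EReal :=
  sSup {r : EReal | ∃ h ∈ K, (∀ i, statVal h (U i) (V i) (p i) ≤ b i) ∧
    r = ((h Finset.univ : ℝ) : EReal)}

end

section
variable {A : Type*}

/-- The set `Γ*_n` of entropic vectors: vectors of the form `W ↦ H(X_W)` for jointly
distributed random variables `(X_i)_{i ∈ A}` with finite range. -/
def EntropicSet (A : Type*) [Fintype A] [DecidableEq A] : Set (Finset A → ℝ) :=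
  {h | ∃ (β : Type) (_ : Fintype β) (_ : DecidableEq β) (P : (A → β) → ℝ),
    (∀ t, 0 ≤ P t) ∧ (∑ t, P t = 1) ∧ ∀ W : Finset A, h W = entropy P Finset.univ W}

end

end

/-!
`Log-U-Bound_K` grows with `K`, so it is enough to close the cycle `Γ ≤ N ≤ closure Γ* ≤ Γ` of
bounds.

`Γ ≤ N`: every polymatroid `h` dominates a normal polymatroid `g` that agrees with `h` on singletons
and on `X`. Passing from `h` to `g` leaves `h(X)` unchanged and does not increase any simple `h(τ)`,
in which only `h(U ∪ V)` can change. To construct `g`, pick a variable `n`, split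
`h(W) = h(W | n) + I(W; n)`, apply induction to the polymatroid `h(· | n)`, and replace `I(W; n)` by
its lower bound `max_{i ∈ W} I(i; n)`, which is normal.

`N ≤ closure Γ*`: the step function `h^W` is the entropy of one fair coin copied to the variables in
`W`, and a `Σ`-inequality valid for step functions is valid for their nonnegative combinations.

`closure Γ* ≤ Γ`: entropic vectors are polymatroids, because comparing the law of `(X, Y, Z)` with
the law that makes `X` and `Y` conditionally independent given `Z` gives `I(X; Y | Z) ≥ 0`.
-/

section NormalPolymatroids

open scoped NNReal

variable {A : Type*} [DecidableEq A]

lemma stepFn_monotone (T : Finset A) : Monotone (stepFn T) := by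
  intro U V hUV
  unfold stepFn
  split_ifs with hU hV
  · exact le_rfl
  · exact absurd (hU.mono (Finset.inter_subset_inter_right hUV)) hV
  · exact zero_le_one
  · exact le_rfl

lemma stepFn_nonneg (T U : Finset A) : 0 ≤ stepFn T U := by
  unfold stepFn; split_ifs <;> simp

variable [Fintype A]

lemma zero_mem_normal : (0 : Finset A → ℝ) ∈ Normal A :=
  ⟨0, fun _ => le_rfl, by simp⟩

lemma add_mem_normal {f g : Finset A → ℝ} (hf : f ∈ Normal A) (hg : g ∈ Normal A) :
    f + g ∈ Normal A := by
  obtain ⟨α, hα, rfl⟩ := hf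
  obtain ⟨γ, hγ, rfl⟩ := hg
  exact ⟨α + γ, fun W => add_nonneg (hα W) (hγ W), by
    simp only [Pi.add_apply, add_smul, Finset.sum_add_distrib]⟩

lemma smul_stepFn_mem_normal (T : Finset A) {c : ℝ} (hc : 0 ≤ c) : c • stepFn T ∈ Normal A :=
  ⟨Pi.single T c, (Pi.single_nonneg.2 hc : (0 : Finset A → ℝ) ≤ Pi.single T c), by
    simp [Pi.single_apply, ite_smul]⟩

lemma monotone_of_mem_normal {f : Finset A → ℝ} (hf : f ∈ Normal A) : Monotone f := by
  obtain ⟨α, hα, rfl⟩ := hf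
  intro U V hUV
  simp only [Finset.sum_apply, Pi.smul_apply, smul_eq_mul]
  gcongr with W
  · exact hα W
  · exact stepFn_monotone W hUV

lemma nonneg_of_mem_normal {f : Finset A → ℝ} (hf : f ∈ Normal A) : 0 ≤ f := by
  obtain ⟨α, hα, rfl⟩ := hf
  exact Finset.sum_nonneg fun W _ => smul_nonneg (hα W) fun U => stepFn_nonneg W U

/-- One step of the layer-cake decomposition of a maximum: split off the bottom layer, of
height `δ`. -/
lemma sup_eq_sup_tsub_add_smul_stepFn (a : A → ℝ≥0) (δ : ℝ≥0) (hδ : ∀ i, a i ≠ 0 → δ ≤ a i) :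
    (fun W : Finset A => ((W.sup a : ℝ≥0) : ℝ)) =
      (fun W => ((W.sup fun i => a i - δ : ℝ≥0) : ℝ)) + (δ : ℝ) • stepFn {i | a i ≠ 0} := by
  funext W
  have hsub : W.sup (fun i => a i - δ) = W.sup a - δ :=
    (Finset.apply_sup_eq_sup_comp_of_linearOrder (· - δ) (fun _ _ h => tsub_le_tsub_right h δ)
      (zero_tsub δ)).symm
  simp only [Pi.add_apply, Pi.smul_apply, smul_eq_mul, hsub, stepFn]
  split_ifs with h
  · obtain ⟨i, hi⟩ := h
    simp only [Finset.mem_inter, Finset.mem_filter, Finset.mem_univ, true_and] at hi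
    have hle : δ ≤ W.sup a := (hδ i hi.2).trans (Finset.le_sup hi.1)
    rw [NNReal.coe_sub hle]
    ring
  · have hzero : W.sup a = 0 := by
      refine (Finset.sup_eq_bot_iff a W).2 fun i hi => ?_
      by_contra hai
      exact h ⟨i, by simpa [hi] using hai⟩
    simp [hzero]

lemma sup_mem_normal (a : A → ℝ≥0) : (fun W : Finset A => ((W.sup a : ℝ≥0) : ℝ)) ∈ Normal A := by
  induction hn : (Finset.univ.filter fun i => a i ≠ 0).card using Nat.strong_induction_on
    generalizing a with
  | _ n ih =>
    rcases (Finset.univ.filter fun i => a i ≠ 0).eq_empty_or_nonempty with hempty | hne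
    · have hzero : a = 0 := funext fun i => by
        simpa using Finset.filter_eq_empty_iff.1 hempty (Finset.mem_univ i)
      convert zero_mem_normal (A := A) using 2 with W
      simp [hzero]
    · obtain ⟨j, hj, hmin⟩ := Finset.exists_min_image _ a hne
      rw [sup_eq_sup_tsub_add_smul_stepFn a (a j) fun i hi => hmin i (by simpa using hi)]
      refine add_mem_normal (ih _ ?_ _ rfl) (smul_stepFn_mem_normal _ (a j).2)
      rw [← hn]
      refine Finset.card_lt_card (Finset.ssubset_iff_of_subset ?_ |>.2 ⟨j, hj, by simp⟩)
      intro i hi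
      simp only [Finset.mem_filter, Finset.mem_univ, true_and] at hi ⊢
      exact fun h => hi (by simp [h])

end NormalPolymatroids

/-- The mutual information `I(W; T) = h(W) + h(T) - h(W ∪ T)` between two sets of variables, for a
set function `h` in the role of the entropy. -/
def mutualInfo {A : Type*} [DecidableEq A] (h : Finset A → ℝ) (W T : Finset A) : ℝ :=
  h W + h T - h (W ∪ T)

namespace IsPolymatroid

variable {A : Type*} [DecidableEq A] {h : Finset A → ℝ}

lemma nonneg (hh : IsPolymatroid h) (U : Finset A) : 0 ≤ h U :=
  hh.1.ge.trans (hh.2.1 ∅ U U.empty_subset)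

lemma contract (hh : IsPolymatroid h) (T : Finset A) :
    IsPolymatroid fun W => h (T ∪ W) - h T := by
  obtain ⟨-, hmono, hsub⟩ := hh
  refine ⟨by simp, fun U V hUV => ?_, fun U V => ?_⟩
  · exact sub_le_sub_right (hmono _ _ (Finset.union_subset_union_right hUV)) _
  · have hsubTUV := hsub (T ∪ U) (T ∪ V)
    rw [← Finset.union_union_distrib_left, ← Finset.union_inter_distrib_left] at hsubTUV
    linarith

lemma mutualInfo_nonneg (hh : IsPolymatroid h) (W T : Finset A) : 0 ≤ mutualInfo h W T := by
  have hsub := hh.2.2 W T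
  have hnonneg := hh.nonneg (W ∩ T)
  unfold mutualInfo
  linarith

lemma mutualInfo_mono_left (hh : IsPolymatroid h) {W W' : Finset A} (hW : W ⊆ W')
    (T : Finset A) : mutualInfo h W T ≤ mutualInfo h W' T := by
  have hsub := hh.2.2 W' (W ∪ T)
  have hle : h W ≤ h (W' ∩ (W ∪ T)) :=
    hh.2.1 _ _ (Finset.subset_inter hW Finset.subset_union_left)
  rw [← Finset.union_assoc, Finset.union_eq_left.2 hW] at hsub
  unfold mutualInfo
  linarith

variable [Fintype A]

lemma exists_normal_le_mutualInfo (hh : IsPolymatroid h) (T : Finset A) :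
    ∃ m ∈ Normal A, (∀ W, m W ≤ mutualInfo h W T) ∧
      ∀ W, ∀ i ∈ W, mutualInfo h {i} T ≤ m W := by
  refine ⟨_, sup_mem_normal fun i => (mutualInfo h {i} T).toNNReal, fun W => ?_, fun W i hi => ?_⟩
  · rw [← Real.le_toNNReal_iff_coe_le (hh.mutualInfo_nonneg W T)]
    refine Finset.sup_le fun i hi => Real.toNNReal_le_toNNReal ?_
    exact hh.mutualInfo_mono_left (Finset.singleton_subset_iff.2 hi) T
  · rw [← Real.toNNReal_le_iff_le_coe]
    exact Finset.le_sup (f := fun i => (mutualInfo h {i} T).toNNReal) hi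

lemma exists_normal_le (hh : IsPolymatroid h) (S : Finset A) :
    ∃ g ∈ Normal A, g ≤ h ∧ h S ≤ g S ∧ ∀ i ∈ S, h {i} ≤ g {i} := by
  induction S using Finset.induction_on generalizing h with
  | empty => exact ⟨0, zero_mem_normal, hh.nonneg, hh.1.le, by simp⟩
  | insert n S _ ih =>
    obtain ⟨k, hk, hkle, hkS, hksingle⟩ := ih (hh.contract {n})
    obtain ⟨m, hm, hmle, hmge⟩ := hh.exists_normal_le_mutualInfo {n}
    have hsplit : ∀ W, h W = (h ({n} ∪ W) - h {n}) + mutualInfo h W {n} := fun W => by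
      rw [mutualInfo, Finset.union_comm]; ring
    have hself : mutualInfo h {n} {n} = h {n} := by simp [mutualInfo]
    refine ⟨k + m, add_mem_normal hk hm, fun W => ?_, ?_, fun i hi => ?_⟩
    · rw [hsplit W]
      exact add_le_add (hkle W) (hmle W)
    · calc h (insert n S) = (h ({n} ∪ S) - h {n}) + mutualInfo h {n} {n} := by
            rw [hself, Finset.insert_eq]; ring
        _ ≤ k (insert n S) + m (insert n S) :=
            add_le_add (hkS.trans (monotone_of_mem_normal hk (Finset.subset_insert n S)))
              (hmge _ n (Finset.mem_insert_self n S))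
    · have hmi := hmge {i} i (Finset.mem_singleton_self i)
      rcases Finset.mem_insert.1 hi with rfl | hiS
      · exact (hself.ge.trans hmi).trans (le_add_of_nonneg_left (nonneg_of_mem_normal hk {i}))
      · rw [hsplit {i}]
        exact add_le_add (hksingle i hiS) hmi

end IsPolymatroid

section ShannonEntropy

open Function

variable {Ω S T R : Type*} [Fintype Ω] [DecidableEq S] [DecidableEq T] [DecidableEq R]

/-- The mass function of the random variable `X` when the outcomes in `Ω` have masses `P`. -/
def law (P : Ω → ℝ) (X : Ω → S) (x : S) : ℝ := ∑ ω with X ω = x, P ω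

/-- The base-2 Shannon entropy of the random variable `X` when the outcomes in `Ω` have
masses `P`; the masses need not sum to one. -/
noncomputable def shannonEntropy [Fintype S] (P : Ω → ℝ) (X : Ω → S) : ℝ :=
  -∑ x, law P X x * Real.logb 2 (law P X x)

variable {P : Ω → ℝ}

lemma law_nonneg (hP : 0 ≤ P) (X : Ω → S) (x : S) : 0 ≤ law P X x :=
  Finset.sum_nonneg fun ω _ => hP ω

lemma law_pos (hP : 0 ≤ P) (X : Ω → S) {ω : Ω} (hω : 0 < P ω) : 0 < law P X (X ω) :=
  hω.trans_le (Finset.single_le_sum (fun ω' _ => hP ω') (by simp))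

lemma exists_pos_of_law_pos {X : Ω → S} {x : S} (hx : 0 < law P X x) : ∃ ω, X ω = x ∧ 0 < P ω := by
  obtain ⟨ω, hω, hpos⟩ := Finset.exists_lt_of_sum_lt (Finset.sum_const_zero.trans_lt hx)
  exact ⟨ω, (Finset.mem_filter.1 hω).2, hpos⟩

lemma law_le_law_of_factorsThrough (hP : 0 ≤ P) {X : Ω → S} {Y : Ω → T}
    (hYX : Y.FactorsThrough X) (ω : Ω) : law P X (X ω) ≤ law P Y (Y ω) :=
  Finset.sum_le_sum_of_subset_of_nonneg
    (Finset.monotone_filter_right _ fun _ _ hω' => hYX hω') fun ω' _ _ => hP ω'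

lemma sum_law_mul [Fintype S] (P : Ω → ℝ) (X : Ω → S) (f : S → ℝ) :
    ∑ x, law P X x * f x = ∑ ω, P ω * f (X ω) := by
  rw [← Finset.sum_fiberwise Finset.univ X]
  refine Finset.sum_congr rfl fun x _ => ?_
  rw [law, Finset.sum_mul]
  exact Finset.sum_congr rfl fun ω hω => by rw [(Finset.mem_filter.1 hω).2]

lemma sum_law [Fintype S] (P : Ω → ℝ) (X : Ω → S) : ∑ x, law P X x = ∑ ω, P ω := by
  simpa using sum_law_mul P X fun _ => 1

lemma law_law [Fintype S] (P : Ω → ℝ) (X : Ω → S) (f : S → T) :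
    law (law P X) f = law P (f ∘ X) := by
  funext y
  simpa [law, Finset.sum_filter] using sum_law_mul P X fun x => if f x = y then 1 else 0

lemma sum_law_prodMk [Fintype S] (P : Ω → ℝ) (X : Ω → S) (Z : Ω → R) (z : R) :
    ∑ x, law P (fun ω => (X ω, Z ω)) (x, z) = law P Z z := by
  rw [law, ← Finset.sum_fiberwise _ X]
  refine Finset.sum_congr rfl fun x _ => ?_
  simp only [law, Finset.filter_filter, Prod.mk.injEq, and_comm]

/-- The mass function on triples `(x, y, z)` that keeps the laws of `(X, Z)` and `(Y, Z)` and makes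
`X` and `Y` conditionally independent given `Z`. -/
noncomputable def condIndepLaw (P : Ω → ℝ) (X : Ω → S) (Y : Ω → T) (Z : Ω → R) :
    S × T × R → ℝ := fun ⟨x, y, z⟩ =>
  law P (fun ω => (X ω, Z ω)) (x, z) * law P (fun ω => (Y ω, Z ω)) (y, z) / law P Z z

lemma condIndepLaw_nonneg (hP : 0 ≤ P) (X : Ω → S) (Y : Ω → T) (Z : Ω → R) :
    0 ≤ condIndepLaw P X Y Z := fun _ =>
  div_nonneg (mul_nonneg (law_nonneg hP _ _) (law_nonneg hP _ _)) (law_nonneg hP _ _)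

lemma condIndepLaw_pos (hP : 0 ≤ P) (X : Ω → S) (Y : Ω → T) (Z : Ω → R) {ω : Ω}
    (hω : 0 < P ω) : 0 < condIndepLaw P X Y Z (X ω, Y ω, Z ω) :=
  div_pos (mul_pos (law_pos hP (fun ω => (X ω, Z ω)) hω) (law_pos hP (fun ω => (Y ω, Z ω)) hω))
    (law_pos hP Z hω)

lemma logb_condIndepLaw (hP : 0 ≤ P) (X : Ω → S) (Y : Ω → T) (Z : Ω → R) {ω : Ω}
    (hω : 0 < P ω) (b : ℝ) : Real.logb b (condIndepLaw P X Y Z (X ω, Y ω, Z ω)) =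
      Real.logb b (law P (fun ω => (X ω, Z ω)) (X ω, Z ω)) +
        Real.logb b (law P (fun ω => (Y ω, Z ω)) (Y ω, Z ω)) - Real.logb b (law P Z (Z ω)) := by
  have hXZ := law_pos hP (fun ω => (X ω, Z ω)) hω
  have hYZ := law_pos hP (fun ω => (Y ω, Z ω)) hω
  rw [condIndepLaw, Real.logb_div (mul_pos hXZ hYZ).ne' (law_pos hP Z hω).ne',
    Real.logb_mul hXZ.ne' hYZ.ne']

section

variable [Fintype S] [Fintype T] [Fintype R]

lemma shannonEntropy_eq_neg_sum (P : Ω → ℝ) (X : Ω → S) :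
    shannonEntropy P X = -∑ ω, P ω * Real.logb 2 (law P X (X ω)) := by
  rw [shannonEntropy, sum_law_mul P X fun x => Real.logb 2 (law P X x)]

lemma shannonEntropy_law (P : Ω → ℝ) (X : Ω → S) (f : S → T) :
    shannonEntropy (law P X) f = shannonEntropy P (f ∘ X) := by
  simp only [shannonEntropy, law_law]

lemma shannonEntropy_of_injective {X : Ω → S} (hX : Injective X) :
    shannonEntropy P X = -∑ ω, P ω * Real.logb 2 (P ω) := by
  classical
  have hlaw : ∀ ω, law P X (X ω) = P ω := fun ω => by
    simp [law, hX.eq_iff, Finset.sum_filter]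
  simp only [shannonEntropy_eq_neg_sum, hlaw]

lemma shannonEntropy_of_forall_eq (hP1 : ∑ ω, P ω = 1) {X : Ω → S} (hX : ∀ ω ω', X ω = X ω') :
    shannonEntropy P X = 0 := by
  have hlaw : ∀ ω, law P X (X ω) = 1 := fun ω => by
    rw [law, Finset.filter_true_of_mem fun ω' _ => hX ω' ω, hP1]
  simp [shannonEntropy_eq_neg_sum, hlaw]

lemma shannonEntropy_le_of_factorsThrough (hP : 0 ≤ P) {X : Ω → S} {Y : Ω → T}
    (hYX : Y.FactorsThrough X) : shannonEntropy P Y ≤ shannonEntropy P X := by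
  rw [shannonEntropy_eq_neg_sum, shannonEntropy_eq_neg_sum, neg_le_neg_iff]
  refine Finset.sum_le_sum fun ω _ => ?_
  rcases (hP ω).eq_or_lt with hω | hω
  · simp [← hω]
  · exact mul_le_mul_of_nonneg_left (Real.logb_le_logb_of_le one_lt_two (law_pos hP X hω)
      (law_le_law_of_factorsThrough hP hYX ω)) hω.le

/-- **Gibbs' inequality**. -/
lemma sum_mul_logb_le_sum_mul_logb {ι : Type*} (s : Finset ι) {b : ℝ} (hb : 1 < b)
    {p q : ι → ℝ} (hp : ∀ i ∈ s, 0 ≤ p i) (hq : ∀ i ∈ s, 0 < p i → 0 < q i)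
    (hq0 : ∀ i ∈ s, 0 ≤ q i) (hsum : ∑ i ∈ s, q i ≤ ∑ i ∈ s, p i) :
    ∑ i ∈ s, p i * Real.logb b (q i) ≤ ∑ i ∈ s, p i * Real.logb b (p i) := by
  have hlog : 0 < Real.log b := Real.log_pos hb
  have hterm : ∀ i ∈ s,
      p i * Real.logb b (q i) ≤ p i * Real.logb b (p i) + (q i - p i) / Real.log b := by
    intro i hi
    rcases (hp i hi).eq_or_lt with hpi | hpi
    · simpa [← hpi] using div_nonneg (hq0 i hi) hlog.le
    · have hqi := hq i hi hpi
      have hratio := Real.log_le_sub_one_of_pos (div_pos hqi hpi)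
      rw [Real.log_div hqi.ne' hpi.ne'] at hratio
      have hmul : p i * (Real.log (q i) - Real.log (p i)) ≤ q i - p i :=
        (mul_le_mul_of_nonneg_left hratio hpi.le).trans_eq (by field_simp)
      rw [← sub_le_iff_le_add', ← mul_sub, Real.logb, Real.logb, ← sub_div, ← mul_div_assoc]
      gcongr
  calc ∑ i ∈ s, p i * Real.logb b (q i)
      ≤ ∑ i ∈ s, p i * Real.logb b (p i) + (∑ i ∈ s, q i - ∑ i ∈ s, p i) / Real.log b := by
        rw [← Finset.sum_sub_distrib, Finset.sum_div, ← Finset.sum_add_distrib]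
        exact Finset.sum_le_sum hterm
    _ ≤ ∑ i ∈ s, p i * Real.logb b (p i) :=
        add_le_of_nonpos_right (div_nonpos_of_nonpos_of_nonneg (sub_nonpos.2 hsum) hlog.le)

lemma sum_condIndepLaw (P : Ω → ℝ) (X : Ω → S) (Y : Ω → T) (Z : Ω → R) :
    ∑ t, condIndepLaw P X Y Z t = ∑ ω, P ω := by
  calc ∑ t, condIndepLaw P X Y Z t
      = ∑ z, (∑ x, law P (fun ω => (X ω, Z ω)) (x, z)) *
          (∑ y, law P (fun ω => (Y ω, Z ω)) (y, z)) / law P Z z := by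
        simp only [Fintype.sum_prod_type, condIndepLaw, Finset.sum_mul_sum, Finset.sum_div]
        exact Finset.sum_comm_cycle
    _ = ∑ z, law P Z z := by simp only [sum_law_prodMk, mul_self_div_self]
    _ = ∑ ω, P ω := sum_law P Z

/-- Nonnegativity of the conditional mutual information `I(X; Y | Z)`. -/
lemma shannonEntropy_prod_add_le (hP : 0 ≤ P) (X : Ω → S) (Y : Ω → T) (Z : Ω → R) :
    shannonEntropy P (fun ω => (X ω, Y ω, Z ω)) + shannonEntropy P Z ≤
      shannonEntropy P (fun ω => (X ω, Z ω)) + shannonEntropy P (fun ω => (Y ω, Z ω)) := by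
  let W : Ω → S × T × R := fun ω => (X ω, Y ω, Z ω)
  have hsupp : ∀ t ∈ Finset.univ, 0 < law P W t → 0 < condIndepLaw P X Y Z t := by
    intro t _ ht
    obtain ⟨ω, rfl, hω⟩ := exists_pos_of_law_pos ht
    exact condIndepLaw_pos hP X Y Z hω
  have hgibbs := sum_mul_logb_le_sum_mul_logb Finset.univ one_lt_two
    (fun t _ => law_nonneg hP W t) hsupp (fun t _ => condIndepLaw_nonneg hP X Y Z t)
    ((sum_condIndepLaw P X Y Z).trans (sum_law P W).symm).le
  have hexpand : ∑ t, law P W t * Real.logb 2 (condIndepLaw P X Y Z t) =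
      shannonEntropy P Z - shannonEntropy P (fun ω => (X ω, Z ω)) -
        shannonEntropy P (fun ω => (Y ω, Z ω)) := by
    rw [sum_law_mul P W fun t => Real.logb 2 (condIndepLaw P X Y Z t)]
    simp only [shannonEntropy_eq_neg_sum, sub_neg_eq_add, neg_add_eq_sub,
      ← Finset.sum_add_distrib, ← Finset.sum_sub_distrib]
    refine Finset.sum_congr rfl fun ω _ => ?_
    rcases (hP ω).eq_or_lt with hω | hω
    · simp [← hω]
    · rw [logb_condIndepLaw hP X Y Z hω]
      ring
  have hjoint : shannonEntropy P W = -∑ t, law P W t * Real.logb 2 (law P W t) := rfl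
  linarith

end

end ShannonEntropy

section EntropicVectors

variable {A : Type*} [DecidableEq A] {β : Type*}

lemma proj_eq_proj_iff {W : Finset A} {t t' : A → β} :
    proj W t = proj W t' ↔ ∀ x ∈ W, t x = t' x := by
  simp only [proj, funext_iff]
  refine forall_congr' fun x => ?_
  split_ifs with hx <;> simp [hx]

lemma proj_factorsThrough_of_subset {U V : Finset A} (hUV : U ⊆ V) :
    (proj U : (A → β) → _).FactorsThrough (proj V) := fun _ _ h =>
  proj_eq_proj_iff.2 fun x hx => proj_eq_proj_iff.1 h x (hUV hx)

variable [Fintype A] [Fintype β] [DecidableEq β]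

lemma entropy_eq_shannonEntropy (P : (A → β) → ℝ) (W : Finset A) :
    entropy P Finset.univ W = shannonEntropy P (proj W) := by
  rw [entropy, shannonEntropy, neg_inj]
  refine Finset.sum_subset (Finset.subset_univ _) fun w _ hw => ?_
  have hmarg : marg P Finset.univ W w = 0 := by
    refine Finset.sum_eq_zero fun t ht => absurd ?_ hw
    exact Finset.mem_image.2 ⟨t, Finset.mem_univ t, (Finset.mem_filter.1 ht).2⟩
  exact mul_eq_zero_of_left hmarg _

lemma isPolymatroid_shannonEntropy_proj {P : (A → β) → ℝ} (hP : 0 ≤ P) (hP1 : ∑ t, P t = 1) :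
    IsPolymatroid fun W : Finset A => shannonEntropy P (proj W) := by
  refine ⟨?_, fun U V hUV => ?_, fun U V => ?_⟩
  · exact shannonEntropy_of_forall_eq hP1 fun t t' => proj_eq_proj_iff.2 (by simp)
  · exact shannonEntropy_le_of_factorsThrough hP (proj_factorsThrough_of_subset hUV)
  · let X : Finset A → (A → β) → A → Option β := proj
    have hunion : (X (U ∪ V)).FactorsThrough fun t => (X U t, X V t, X (U ∩ V) t) := by
      intro t t' h
      simp only [X, Prod.mk.injEq, proj_eq_proj_iff, Finset.mem_union] at h ⊢
      exact fun x hx => hx.elim (h.1 x) (h.2.1 x)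
    have hleft : (fun t => (X U t, X (U ∩ V) t)).FactorsThrough (X U) := fun t t' h =>
      Prod.ext h (proj_factorsThrough_of_subset Finset.inter_subset_left h)
    have hright : (fun t => (X V t, X (U ∩ V) t)).FactorsThrough (X V) := fun t t' h =>
      Prod.ext h (proj_factorsThrough_of_subset Finset.inter_subset_right h)
    calc shannonEntropy P (X (U ∪ V)) + shannonEntropy P (X (U ∩ V))
        ≤ shannonEntropy P (fun t => (X U t, X V t, X (U ∩ V) t)) +
            shannonEntropy P (X (U ∩ V)) := by
          gcongr
          exact shannonEntropy_le_of_factorsThrough hP hunion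
      _ ≤ shannonEntropy P (fun t => (X U t, X (U ∩ V) t)) +
            shannonEntropy P (fun t => (X V t, X (U ∩ V) t)) :=
          shannonEntropy_prod_add_le hP _ _ _
      _ ≤ shannonEntropy P (X U) + shannonEntropy P (X V) :=
          add_le_add (shannonEntropy_le_of_factorsThrough hP hleft)
            (shannonEntropy_le_of_factorsThrough hP hright)

lemma shannonEntropy_proj_comp_mem_entropicSet {Ω : Type*} [Fintype Ω] {γ : Type} [Fintype γ]
    [DecidableEq γ] {P : Ω → ℝ} (hP : 0 ≤ P) (hP1 : ∑ ω, P ω = 1) (X : Ω → A → γ) :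
    (fun W : Finset A => shannonEntropy P (proj W ∘ X)) ∈ EntropicSet A :=
  ⟨γ, inferInstance, inferInstance, law P X, law_nonneg hP X, (sum_law P X).trans hP1, fun W => by
    rw [entropy_eq_shannonEntropy, shannonEntropy_law]⟩

lemma entropicSet_subset_gamma : EntropicSet A ⊆ Gamma A := by
  rintro h ⟨β, _, _, P, hP, hP1, hh⟩
  have hshannon : h = fun W => shannonEntropy P (proj W) :=
    funext fun W => (hh W).trans (entropy_eq_shannonEntropy P W)
  exact hshannon ▸ isPolymatroid_shannonEntropy_proj hP hP1

lemma stepFn_mem_entropicSet (W : Finset A) : stepFn W ∈ EntropicSet A := by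
  let P : Bool → ℝ := fun _ => 1 / 2
  let X : Bool → A → Bool := fun coin x => decide (x ∈ W) && coin
  have hP1 : ∑ c, P c = 1 := by norm_num [P]
  convert shannonEntropy_proj_comp_mem_entropicSet (fun _ => by norm_num : 0 ≤ P) hP1 X with U
  unfold stepFn
  split_ifs with hUW
  · obtain ⟨x, hx⟩ := hUW
    rw [Finset.mem_inter] at hx
    have hinj : (proj U ∘ X).Injective := fun c c' h => by
      simpa [X, hx.2] using proj_eq_proj_iff.1 h x hx.1
    rw [shannonEntropy_of_injective hinj]
    simp [P]
  · refine (shannonEntropy_of_forall_eq hP1 fun c c' => proj_eq_proj_iff.2 fun x hx => ?_).symm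
    have hxW : x ∉ W := fun hxW => hUW ⟨x, Finset.mem_inter.2 ⟨hx, hxW⟩⟩
    simp [X, hxW]

end EntropicVectors

lemma isClosed_gamma (A : Type*) [DecidableEq A] : IsClosed (Gamma A) := by
  simp only [Gamma, IsPolymatroid, Set.ofPred_and, Set.ofPred_forall]
  refine (isClosed_eq (by fun_prop) (by fun_prop)).inter (.inter ?_ ?_)
  · exact isClosed_iInter fun U => isClosed_iInter fun V => isClosed_iInter fun _ =>
      isClosed_le (by fun_prop) (by fun_prop)
  · exact isClosed_iInter fun U => isClosed_iInter fun V =>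
      isClosed_le (by fun_prop) (by fun_prop)

section Bounds

variable {A : Type*} [DecidableEq A]

lemma statVal_le_statVal {g h : Finset A → ℝ} (hgh : g ≤ h) {U : Finset A} (hU : g U = h U)
    (V : Finset A) (p : ℝ≥0∞) : statVal g U V p ≤ statVal h U V p := by
  unfold statVal
  rw [hU]
  gcongr
  exact hgh _

lemma statVal_sum_smul {ι : Type*} (t : Finset ι) (α : ι → ℝ) (f : ι → Finset A → ℝ)
    (U V : Finset A) (p : ℝ≥0∞) :
    statVal (∑ j ∈ t, α j • f j) U V p = ∑ j ∈ t, α j * statVal (f j) U V p := by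
  simp only [statVal, Finset.sum_apply, Pi.smul_apply, smul_eq_mul, Finset.mul_sum,
    ← Finset.sum_sub_distrib, ← Finset.sum_add_distrib]
  exact Finset.sum_congr rfl fun j _ => by ring

variable [Fintype A] {s : ℕ} {U V : Fin s → Finset A} {p : Fin s → ℝ≥0∞} {b : Fin s → ℝ}
  {K L : Set (Finset A → ℝ)}

/-- Validity on `K` of the `Σ`-inequality `∑ i, w i * h(τ i) ≥ h(X)` with weights `w`. -/
def IsValidOn (K : Set (Finset A → ℝ)) (U V : Fin s → Finset A) (p : Fin s → ℝ≥0∞)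
    (w : Fin s → ℝ) : Prop :=
  ∀ h ∈ K, ∑ i, w i * statVal h (U i) (V i) (p i) ≥ h Finset.univ

lemma logUBound_le_of_isValidOn_imp
    (hvalid : ∀ w, (∀ i, 0 ≤ w i) → IsValidOn L U V p w → IsValidOn K U V p w) :
    LogUBound K s U V p b ≤ LogUBound L s U V p b := by
  refine sInf_le_sInf ?_
  rintro r ⟨w, hw, hL, rfl⟩
  exact ⟨w, hw, hvalid w hw hL, rfl⟩

lemma logUBound_mono (hKL : K ⊆ L) : LogUBound K s U V p b ≤ LogUBound L s U V p b :=
  logUBound_le_of_isValidOn_imp fun _ _ hvalid h hh => hvalid h (hKL hh)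

lemma isValidOn_normal_of_stepFn_mem (hK : ∀ W, stepFn W ∈ K) {w : Fin s → ℝ}
    (hvalid : IsValidOn K U V p w) : IsValidOn (Normal A) U V p w := by
  rintro h ⟨α, hα, rfl⟩
  calc ∑ i, w i * statVal (∑ W, α W • stepFn W) (U i) (V i) (p i)
      = ∑ W, α W * ∑ i, w i * statVal (stepFn W) (U i) (V i) (p i) := by
        simp only [statVal_sum_smul, Finset.mul_sum, mul_left_comm (w _)]
        exact Finset.sum_comm
    _ ≥ ∑ W, α W * stepFn W Finset.univ :=
        Finset.sum_le_sum fun W _ => mul_le_mul_of_nonneg_left (hvalid _ (hK W)) (hα W)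
    _ = (∑ W, α W • stepFn W) Finset.univ := by
        simp only [Finset.sum_apply, Pi.smul_apply, smul_eq_mul]

lemma isValidOn_gamma_of_isValidOn_normal (hsimple : ∀ i, (U i).card ≤ 1) {w : Fin s → ℝ}
    (hw : ∀ i, 0 ≤ w i) (hvalid : IsValidOn (Normal A) U V p w) :
    IsValidOn (Gamma A) U V p w := by
  intro h hh
  obtain ⟨g, hg, hgh, huniv, hsingle⟩ := IsPolymatroid.exists_normal_le hh Finset.univ
  have hU : ∀ i, g (U i) = h (U i) := by
    intro i
    refine le_antisymm (hgh _) ?_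
    rcases Nat.le_one_iff_eq_zero_or_eq_one.1 (hsimple i) with h0 | h1
    · rw [Finset.card_eq_zero.1 h0, hh.1]
      exact nonneg_of_mem_normal hg ∅
    · obtain ⟨x, hx⟩ := Finset.card_eq_one.1 h1
      exact hx ▸ hsingle x (Finset.mem_univ x)
  calc h Finset.univ ≤ g Finset.univ := huniv
    _ ≤ ∑ i, w i * statVal g (U i) (V i) (p i) := hvalid g hg
    _ ≤ ∑ i, w i * statVal h (U i) (V i) (p i) :=
        Finset.sum_le_sum fun i _ =>
          mul_le_mul_of_nonneg_left (statVal_le_statVal hgh (hU i) (V i) (p i)) (hw i)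

end Bounds

/-- If all abstract statistics are simple (`|U i| ≤ 1`), then the normal
bound, the almost-entropic bound, and the polymatroid bound coincide. -/
theorem simple_bounds_coincide {A : Type*} [Fintype A] [DecidableEq A]
    (s : ℕ) (U V : Fin s → Finset A) (p : Fin s → ℝ≥0∞) (hp : ∀ i, 0 < p i)
    (hsimple : ∀ i, (U i).card ≤ 1) (b : Fin s → ℝ) :
    LogUBound (Normal A) s U V p b = LogUBound (closure (EntropicSet A)) s U V p b ∧
    LogUBound (closure (EntropicSet A)) s U V p b = LogUBound (Gamma A) s U V p b := by
  have hΓN : LogUBound (Gamma A) s U V p b ≤ LogUBound (Normal A) s U V p b :=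
    logUBound_le_of_isValidOn_imp fun _ hw => isValidOn_gamma_of_isValidOn_normal hsimple hw
  have hNE : LogUBound (Normal A) s U V p b ≤ LogUBound (closure (EntropicSet A)) s U V p b :=
    logUBound_le_of_isValidOn_imp fun _ _ =>
      isValidOn_normal_of_stepFn_mem fun W => subset_closure (stepFn_mem_entropicSet W)
  have hEΓ : LogUBound (closure (EntropicSet A)) s U V p b ≤ LogUBound (Gamma A) s U V p b :=
    logUBound_mono (closure_minimal entropicSet_subset_gamma (isClosed_gamma A))
  exact ⟨hNE.antisymm (hEΓ.trans hΓN), hEΓ.antisymm (hΓN.trans hNE)⟩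

end JoinBounds
end

section
/- Let R be a nonempty finite relation over an attribute set containing U ∪ V, let p ∈ (0, ∞), let B ≥ 1, and suppose ||deg_R(V|U)||_p ≤ B. Let N = |R|. Then R can be partitioned into at most ⌈2^p⌉·(⌊log₂ N⌋ + 1) pairwise disjoint relations R_1, R_2, … such that each part R_i strongly satisfies the statistics, i.e. there exists a real d > 0 with ||deg_{R_i}(V|U)||_∞ ≤ d and |Π_U(R_i)| ≤ B^p / d^p. -/
open scoped BigOperators ENNReal

namespace JoinBounds

noncomputable section

variable {A α : Type*}

/-- The `ℓ_p`-norm of the degree sequence for a finite real exponent `p`. -/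
def lpNormR {A α : Type*} [Fintype A] [DecidableEq A] [DecidableEq α]
    (U V : Finset A) (R : Finset (A → α)) (p : ℝ) : ℝ :=
  (∑ u ∈ projR U R, (deg U V R u : ℝ) ^ p) ^ (1 / p)

/-- The `ℓ_∞`-norm (maximum) of the degree sequence. -/
def lpNormInf {A α : Type*} [Fintype A] [DecidableEq A] [DecidableEq α]
    (U V : Finset A) (R : Finset (A → α)) : ℕ :=
  (projR U R).sup fun u => deg U V R u

end

/-!
Bucket the `U`-tuples of `R` by `⌊log₂ deg⌋`, which takes at most `⌊log₂ N⌋ + 1` values, and split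
each bucket `S` evenly into `m = ⌈2^p⌉` parts, so that a part has at most `⌈|S| / m⌉` elements.
Let `d` be the largest degree in a part. All degrees in the bucket exceed `d / 2`, so `m` of its
elements outweigh a single `d ^ p`. Charging one element of the part to the maximiser itself and
every other one to its own `m` elements of `S` gives `|part| * d ^ p ≤ ∑ deg ^ p ≤ B ^ p`.
-/

section Coloring

variable {β M : Type*}

open Finset

theorem exists_coloring_card_filter_le_ceilDiv (S : Finset β) (m : ℕ) [NeZero m] :
    ∃ f : β → Fin m, ∀ c, #{x ∈ S | f x = c} ≤ #S ⌈/⌉ m := by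
  classical
  let index : β → ℕ := fun x => S.toList.idxOf x
  have index_lt {x : β} (hx : x ∈ S) : index x < #S := by
    simpa [index] using List.idxOf_lt_length_of_mem (mem_toList.2 hx)
  have hm : 0 < m := NeZero.pos m
  refine ⟨fun x => Fin.ofNat m (index x), fun c => ?_⟩
  rw [← card_range (#S ⌈/⌉ m)]
  refine card_le_card_of_injOn (fun x => index x / m) (fun x hx => ?_) fun x hx y hy hxy => ?_
  · have hx := index_lt (mem_filter.1 hx).1
    rw [mem_coe, mem_range, Nat.div_lt_iff_lt_mul hm, mul_comm]
    exact hx.trans_le (le_smul_ceilDiv hm)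
  · obtain ⟨hxS, hxc⟩ := mem_filter.1 hx
    obtain ⟨-, hyc⟩ := mem_filter.1 hy
    have hmod : index x % m = index y % m := congrArg Fin.val (hxc.trans hyc.symm)
    have hindex : index x = index y := by
      rw [← Nat.div_add_mod (index x) m, ← Nat.div_add_mod (index y) m, hmod]
      exact congrArg (m * · + _) hxy
    exact (List.idxOf_inj (mem_toList.2 hxS)).1 hindex

theorem ceilDiv_card_nsmul_le_sum [AddCommMonoid M] [PartialOrder M] [IsOrderedAddMonoid M]
    {S : Finset β} {v : β → M} {a : M} {m : ℕ} {u : β} (ha : 0 ≤ a) (hu : u ∈ S)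
    (hlower : ∀ x ∈ S, a ≤ v x) (hupper : v u ≤ m • a) :
    (#S ⌈/⌉ m) • v u ≤ ∑ x ∈ S, v x := by
  classical
  have hvu : 0 ≤ v u := ha.trans (hlower u hu)
  have hceil : #S ⌈/⌉ m ≤ #(S.erase u) / m + 1 := by
    rw [Nat.ceilDiv_eq_add_pred_div, ← card_erase_add_one hu]
    rcases m.eq_zero_or_pos with rfl | hm
    · simp
    · rw [← Nat.add_div_right _ hm]
      exact Nat.div_le_div_right (by lia)
  calc (#S ⌈/⌉ m) • v u
      ≤ (#(S.erase u) / m + 1) • v u := nsmul_le_nsmul_left hvu hceil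
    _ = (#(S.erase u) / m) • v u + v u := succ_nsmul _ _
    _ ≤ (#(S.erase u) / m) • m • a + v u := by gcongr
    _ = (#(S.erase u) / m * m) • a + v u := by rw [mul_nsmul']
    _ ≤ #(S.erase u) • a + v u := by
      gcongr
      exact Nat.div_mul_le_self _ _
    _ ≤ ∑ x ∈ S.erase u, v x + v u := by
      gcongr
      exact card_nsmul_le_sum _ _ _ fun x hx => hlower x (mem_of_mem_erase hx)
    _ = ∑ x ∈ S, v x := sum_erase_add _ _ hu

theorem ceilDiv_card_filter_log_mul_rpow_le_sum {S : Finset β} {w : β → ℕ} {b m : ℕ} {p : ℝ}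
    (hb : 1 < b) (hp : 0 ≤ p) (hm : (b : ℝ) ^ p ≤ m) (hw : ∀ x ∈ S, w x ≠ 0) {u : β}
    (hu : u ∈ S) :
    (#{x ∈ S | Nat.log b (w x) = Nat.log b (w u)} ⌈/⌉ m : ℕ) * (w u : ℝ) ^ p ≤
      ∑ x ∈ S, (w x : ℝ) ^ p := by
  set j := Nat.log b (w u) with hj
  have hlower : ∀ x ∈ {x ∈ S | Nat.log b (w x) = j}, ((b : ℝ) ^ j) ^ p ≤ (w x : ℝ) ^ p := by
    intro x hx
    obtain ⟨hxS, hxj⟩ := mem_filter.1 hx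
    have hpow : b ^ j ≤ w x := hxj ▸ Nat.pow_log_le_self b (hw x hxS)
    gcongr
    exact_mod_cast hpow
  have hupper : (w u : ℝ) ^ p ≤ m • ((b : ℝ) ^ j) ^ p :=
    calc (w u : ℝ) ^ p
        ≤ ((b : ℝ) * (b : ℝ) ^ j) ^ p := by
          gcongr
          rw [← pow_succ']
          exact_mod_cast (Nat.lt_pow_succ_log_self hb (w u)).le
      _ = (b : ℝ) ^ p * ((b : ℝ) ^ j) ^ p := Real.mul_rpow (by positivity) (by positivity)
      _ ≤ m * ((b : ℝ) ^ j) ^ p := by gcongr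
      _ = m • ((b : ℝ) ^ j) ^ p := (nsmul_eq_mul _ _).symm
  have hu' : u ∈ {x ∈ S | Nat.log b (w x) = j} := mem_filter.2 ⟨hu, hj.symm⟩
  calc (#{x ∈ S | Nat.log b (w x) = j} ⌈/⌉ m : ℕ) * (w u : ℝ) ^ p
      ≤ ∑ x ∈ S with Nat.log b (w x) = j, (w x : ℝ) ^ p := by
        rw [← nsmul_eq_mul]
        exact ceilDiv_card_nsmul_le_sum (v := fun x => (w x : ℝ) ^ p) (by positivity) hu'
          hlower hupper
    _ ≤ ∑ x ∈ S, (w x : ℝ) ^ p :=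
        sum_le_sum_of_subset_of_nonneg (filter_subset _ _) fun _ _ _ => by positivity

theorem exists_coloring_card_mul_rpow_le_sum {S : Finset β} {w : β → ℕ} {b m N : ℕ} {p : ℝ}
    (hb : 1 < b) (hp : 0 ≤ p) (hm : (b : ℝ) ^ p ≤ m) (hw : ∀ x ∈ S, w x ≠ 0)
    (hN : ∀ x ∈ S, w x ≤ N) :
    ∃ c : β → Fin m × Fin (Nat.log b N + 1),
      ∀ u ∈ S, (#{x ∈ S | c x = c u} : ℝ) * (w u : ℝ) ^ p ≤ ∑ x ∈ S, (w x : ℝ) ^ p := by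
  have hm₀ : (0 : ℝ) < m := lt_of_lt_of_le (by positivity) hm
  have : NeZero m := ⟨(Nat.cast_pos.1 hm₀).ne'⟩
  let level : β → ℕ := fun x => Nat.log b (w x)
  have level_lt {x : β} (hx : x ∈ S) : level x < Nat.log b N + 1 :=
    Nat.lt_succ_of_le (Nat.log_mono_right (hN x hx))
  choose f hf using fun j => exists_coloring_card_filter_le_ceilDiv {x ∈ S | level x = j} m
  let c : β → Fin m × Fin (Nat.log b N + 1) := fun x => (f (level x) x, Fin.ofNat _ (level x))
  refine ⟨c, fun u hu => ?_⟩
  have hsub : {x ∈ S | c x = c u} ⊆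
      {x ∈ {x ∈ S | level x = level u} | f (level u) x = f (level u) u} := by
    intro x hx
    obtain ⟨hxS, hxu⟩ := mem_filter.1 hx
    obtain ⟨hcolor, hmod⟩ := Prod.mk.inj hxu
    have hlevel : level x = level u := by
      simpa [Fin.ext_iff, Nat.mod_eq_of_lt, level_lt hxS, level_lt hu] using hmod
    exact mem_filter.2 ⟨mem_filter.2 ⟨hxS, hlevel⟩, hlevel ▸ hcolor⟩
  refine le_trans ?_ (ceilDiv_card_filter_log_mul_rpow_le_sum hb hp hm hw hu)
  gcongr
  exact (card_le_card hsub).trans (hf _ _)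

end Coloring

section Degree

variable {A α : Type*} [Fintype A] [DecidableEq A] [DecidableEq α]
  {U V : Finset A} {Q R : Finset (A → α)} {p B : ℝ}

/-- The relation `R` strongly satisfies the statistics `‖deg(V|U)‖_p ≤ B`: some uniform
bound `d` on the degrees would still satisfy them if every `U`-tuple of `R` had degree `d`.
Requiring `0 < d` keeps the quotient `B ^ p / d ^ p` from being a division by `0`. -/
def StronglySatisfies (U V : Finset A) (R : Finset (A → α)) (p B : ℝ) : Prop :=
  ∃ d : ℝ, 0 < d ∧ (lpNormInf U V R : ℝ) ≤ d ∧ ((projR U R).card : ℝ) ≤ B ^ p / d ^ p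

theorem projR_filter_proj (U : Finset A) (R : Finset (A → α)) (P : (A → Option α) → Prop)
    [DecidablePred P] :
    projR U (R.filter fun t => P (proj U t)) = (projR U R).filter P :=
  Finset.filter_image.symm

theorem deg_mono (U V : Finset A) (h : Q ⊆ R) (u : A → Option α) :
    deg U V Q u ≤ deg U V R u :=
  Finset.card_le_card (Finset.image_subset_image (Finset.filter_subset_filter _ h))

theorem deg_pos {u : A → Option α} (hu : u ∈ projR U R) : 0 < deg U V R u := by
  obtain ⟨t, ht, rfl⟩ := Finset.mem_image.1 hu
  exact Finset.card_pos.2 ⟨proj V t, Finset.mem_image_of_mem _ (Finset.mem_filter.2 ⟨ht, rfl⟩)⟩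

theorem deg_le_card (U V : Finset A) (R : Finset (A → α)) (u : A → Option α) :
    deg U V R u ≤ R.card :=
  Finset.card_image_le.trans (Finset.card_filter_le _ _)

theorem lpNormR_le_iff (hp : 0 < p) (hB : 0 ≤ B) :
    lpNormR U V R p ≤ B ↔ ∑ u ∈ projR U R, (deg U V R u : ℝ) ^ p ≤ B ^ p := by
  rw [lpNormR, one_div,
    Real.rpow_inv_le_iff_of_pos (Finset.sum_nonneg fun _ _ => by positivity) hB hp]

theorem stronglySatisfies_of_card_mul_deg_rpow_le (hB : 0 ≤ B) (hQR : Q ⊆ R)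
    (h : ∀ u ∈ projR U Q, ((projR U Q).card : ℝ) * (deg U V R u : ℝ) ^ p ≤ B ^ p) :
    StronglySatisfies U V Q p B := by
  rcases (projR U Q).eq_empty_or_nonempty with hempty | hne
  · refine ⟨1, one_pos, ?_, ?_⟩
    · simp [lpNormInf, hempty]
    · rw [hempty, Finset.card_empty, Nat.cast_zero]
      positivity
  · obtain ⟨u, hu, hmax⟩ := Finset.exists_max_image (projR U Q) (deg U V R) hne
    have hdeg : (0 : ℝ) < deg U V R u :=
      Nat.cast_pos.2 (deg_pos (Finset.image_subset_image hQR hu))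
    refine ⟨deg U V R u, hdeg, ?_, (le_div_iff₀ (Real.rpow_pos_of_pos hdeg p)).2 (h u hu)⟩
    exact Nat.cast_le.2 (Finset.sup_le fun x hx => (deg_mono U V hQR x).trans (hmax x hx))

end Degree

/-- **partition lemma.** If `‖deg_R(V|U)‖_p ≤ B` (with `p ∈ (0,∞)`, `B ≥ 1`),
then `R` can be partitioned into at most `⌈2^p⌉·(⌊log₂ N⌋ + 1)` pairwise disjoint relations,
each of which strongly satisfies the statistics: there is `d > 0` with
`‖deg_{R_i}(V|U)‖_∞ ≤ d` and `|Π_U(R_i)| ≤ B^p / d^p`. -/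
theorem partition_strongly_satisfies {A α : Type*} [Fintype A] [DecidableEq A] [DecidableEq α]
    (R : Finset (A → α)) (hR : R.Nonempty) (U V : Finset A)
    (p : ℝ) (hp : 0 < p) (B : ℝ) (hB : 1 ≤ B)
    (hstat : lpNormR U V R p ≤ B) :
    ∃ (k : ℕ) (parts : Fin k → Finset (A → α)),
      k ≤ ⌈(2 : ℝ) ^ p⌉₊ * (Nat.log 2 R.card + 1) ∧
      (∀ i j, i ≠ j → Disjoint (parts i) (parts j)) ∧
      (∀ i, parts i ⊆ R) ∧
      (∀ t ∈ R, ∃ i, t ∈ parts i) ∧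
      ∀ i, ∃ d : ℝ, 0 < d ∧ (lpNormInf U V (parts i) : ℝ) ≤ d ∧
        ((projR U (parts i)).card : ℝ) ≤ B ^ p / d ^ p := by
  have hB₀ : 0 ≤ B := zero_le_one.trans hB
  have hceil : ((2 : ℕ) : ℝ) ^ p ≤ ⌈(2 : ℝ) ^ p⌉₊ := by exact_mod_cast Nat.le_ceil _
  obtain ⟨c, hc⟩ := exists_coloring_card_mul_rpow_le_sum (S := projR U R) (w := deg U V R)
    one_lt_two hp.le hceil (fun _ hu => (deg_pos hu).ne') (fun u _ => deg_le_card U V R u)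
  refine ⟨_, fun i => {t ∈ R | c (proj U t) = finProdFinEquiv.symm i}, le_rfl, ?disjoint,
    fun _ => Finset.filter_subset _ _, ?cover, fun i => ?stronglySatisfies⟩
  case disjoint =>
    exact fun i j hij => Finset.disjoint_filter.2 fun t _ hi hj =>
      hij (finProdFinEquiv.symm.injective (hi.symm.trans hj))
  case cover =>
    exact fun t ht => ⟨finProdFinEquiv (c (proj U t)), by simp [ht]⟩
  case stronglySatisfies =>
    refine stronglySatisfies_of_card_mul_deg_rpow_le hB₀ (Finset.filter_subset _ _) fun u hu => ?_
    rw [projR_filter_proj U R (c · = finProdFinEquiv.symm i)] at hu ⊢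
    obtain ⟨huR, hui⟩ := Finset.mem_filter.1 hu
    rw [← hui]
    exact (hc u huR).trans ((lpNormR_le_iff hp hB₀).1 hstat)

end JoinBounds
end
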